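/- Let θ : ℝⁿ → [−∞,+∞] be symmetric and locally Lipschitz continuous relative to its domain, let g = θ∘λ be the associated spectral function, and let Y ∈ Sⁿ be a proximal subgradient of g at X ∈ Sⁿ. Assume that for every H ∈ T_{dom g}(X), θ is parabolically epi-differentiable at λ(X) for λ'(X;H). Then dom d²g(X,Y) = C_g(X,Y), where dom d²g(X,Y) = {H ∈ Sⁿ : d²g(X,Y)(H) < +∞}. -/

import Mathlib

open Filter Topology Matrix

noncomputable section

namespace SpecPaper

/-! ## Generic variational analysis definitions over a topological real vector space -/

variable {E : Type*}

section Generic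

variable [AddCommGroup E] [Module ℝ E] [TopologicalSpace E]

/-- `f x` is finite (neither `+∞` nor `-∞`). -/
def IsFiniteAt (f : E → EReal) (x : E) : Prop :=
  f x ≠ ⊤ ∧ f x ≠ ⊥

/-- The norm induced by a given inner product. -/
noncomputable def nrm (ip : E → E → ℝ) (x : E) : ℝ :=
  Real.sqrt (ip x x)

/-- The subderivative `df(x)(w)`. -/
noncomputable def subderiv (f : E → EReal) (x w : E) : EReal :=
  Filter.liminf (fun p : ℝ × E => (((p.1)⁻¹ : ℝ) : EReal) * (f (x + p.1 • p.2) - f x))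
    ((nhdsWithin (0 : ℝ) (Set.Ioi 0)) ×ˢ nhds w)

/-- The second-order difference quotient `Δ²ₜ f(x,v)(w)`. -/
noncomputable def sdq2 (ip : E → E → ℝ) (f : E → EReal) (x v : E) (t : ℝ) (w : E) : EReal :=
  (((2 / t ^ 2) : ℝ) : EReal) * (f (x + t • w) - f x - ((t * ip v w : ℝ) : EReal))

/-- The second subderivative `d²f(x,v)(w)`. -/
noncomputable def subderiv2 (ip : E → E → ℝ) (f : E → EReal) (x v w : E) : EReal :=
  Filter.liminf (fun p : ℝ × E => sdq2 ip f x v p.1 p.2)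
    ((nhdsWithin (0 : ℝ) (Set.Ioi 0)) ×ˢ nhds w)

/-- Twice epi-differentiability of `f` at `x` for `v`. -/
def TwiceEpiDiff (ip : E → E → ℝ) (f : E → EReal) (x v : E) : Prop :=
  IsFiniteAt f x ∧
    ∀ t : ℕ → ℝ, (∀ k, 0 < t k) → Tendsto t atTop (nhds 0) →
      ∀ w : E, ∃ ws : ℕ → E, Tendsto ws atTop (nhds w) ∧
        Tendsto (fun k => sdq2 ip f x v (t k) (ws k)) atTop (nhds (subderiv2 ip f x v w))

/-- `v` is a regular subgradient of `f` at `x`. -/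
def RegSubgrad (ip : E → E → ℝ) (f : E → EReal) (x v : E) : Prop :=
  IsFiniteAt f x ∧
    (0 : EReal) ≤ Filter.liminf
      (fun y : E =>
        (((nrm ip (y - x))⁻¹ : ℝ) : EReal) * (f y - f x - ((ip v (y - x) : ℝ) : EReal)))
      (nhdsWithin x {x}ᶜ)

/-- `v` is a (limiting) subgradient of `f` at `x`. -/
def LimSubgrad (ip : E → E → ℝ) (f : E → EReal) (x v : E) : Prop :=
  ∃ xs vs : ℕ → E, (∀ k, RegSubgrad ip f (xs k) (vs k)) ∧
    Tendsto xs atTop (nhds x) ∧ Tendsto vs atTop (nhds v) ∧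
    Tendsto (fun k => f (xs k)) atTop (nhds (f x))

/-- The tangent cone to `C` at `x`. -/
def tangentCone (C : Set E) (x : E) : Set E :=
  {w | ∃ (t : ℕ → ℝ) (ws : ℕ → E), (∀ k, 0 < t k) ∧ Tendsto t atTop (nhds 0) ∧
    Tendsto ws atTop (nhds w) ∧ ∀ k, x + t k • ws k ∈ C}

/-- The regular normal cone to `C` at `x`. -/
def regNormalCone (ip : E → E → ℝ) (C : Set E) (x : E) : Set E :=
  {v | ∀ w ∈ tangentCone C x, ip v w ≤ 0}

/-- The limiting normal cone to `C` at `x`. -/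
def limNormalCone (ip : E → E → ℝ) (C : Set E) (x : E) : Set E :=
  {v | ∃ xs vs : ℕ → E, (∀ k, xs k ∈ C) ∧ (∀ k, vs k ∈ regNormalCone ip C (xs k)) ∧
    Tendsto xs atTop (nhds x) ∧ Tendsto vs atTop (nhds v)}

/-- The critical cone `C_f(x,v)`. -/
def criticalCone (ip : E → E → ℝ) (f : E → EReal) (x v : E) : Set E :=
  {w | subderiv f x w = ((ip v w : ℝ) : EReal)}

/-- `f` is locally Lipschitz continuous at `x` relative to its domain. -/
def LocLipAtRelDom (ip : E → E → ℝ) (f : E → EReal) (x : E) : Prop :=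
  IsFiniteAt f x ∧
    ∃ V ∈ nhds x, ∃ ℓ : ℝ, 0 ≤ ℓ ∧
      ∀ a ∈ V, ∀ b ∈ V, f a ≠ ⊤ → f b ≠ ⊤ →
        f a ≠ ⊥ ∧ f b ≠ ⊥ ∧ |(f a).toReal - (f b).toReal| ≤ ℓ * nrm ip (a - b)

/-- `f` is locally Lipschitz continuous relative to its domain. -/
def LocLipRelDom (ip : E → E → ℝ) (f : E → EReal) : Prop :=
  ∀ x : E, f x ≠ ⊤ → LocLipAtRelDom ip f x

/-- `v` is a proximal subgradient of `f` at `x`. -/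
def ProxSubgrad (ip : E → E → ℝ) (f : E → EReal) (x v : E) : Prop :=
  IsFiniteAt f x ∧
    ∃ r > (0 : ℝ), ∃ ε > (0 : ℝ), ∀ x' : E, nrm ip (x' - x) ≤ ε →
      f x + ((ip v (x' - x) - r / 2 * ip (x' - x) (x' - x) : ℝ) : EReal) ≤ f x'

/-- `f` is prox-regular at `x` for `v`. -/
def ProxRegularAtFor (ip : E → E → ℝ) (f : E → EReal) (x v : E) : Prop :=
  IsFiniteAt f x ∧
    (∃ δ > (0 : ℝ), LowerSemicontinuousOn f {x' | nrm ip (x' - x) < δ}) ∧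
    ∃ ε > (0 : ℝ), ∃ r : ℝ, 0 ≤ r ∧
      ∀ x₁ v₁ : E, LimSubgrad ip f x₁ v₁ → nrm ip (x₁ - x) < ε → nrm ip (v₁ - v) < ε →
        f x₁ < f x + (ε : EReal) →
        ∀ x' : E, nrm ip (x' - x) < ε →
          f x₁ + ((ip v₁ (x' - x₁) - r / 2 * ip (x' - x₁) (x' - x₁) : ℝ) : EReal) ≤ f x'

/-- `f` is prox-regular at `x` (for every subgradient). -/
def ProxRegularAt (ip : E → E → ℝ) (f : E → EReal) (x : E) : Prop :=
  ∀ v : E, LimSubgrad ip f x v → ProxRegularAtFor ip f x v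

/-- `f` is subdifferentially continuous at `x`. -/
def SubdiffContAt (ip : E → E → ℝ) (f : E → EReal) (x : E) : Prop :=
  ∀ v : E, LimSubgrad ip f x v →
    ∀ xs vs : ℕ → E, (∀ k, LimSubgrad ip f (xs k) (vs k)) →
      Tendsto xs atTop (nhds x) → Tendsto vs atTop (nhds v) →
      Tendsto (fun k => f (xs k)) atTop (nhds (f x))

/-- `f` is prox-bounded. -/
def ProxBounded (ip : E → E → ℝ) (f : E → EReal) : Prop :=
  ∃ α c : ℝ, ∀ x : E, (c : EReal) ≤ f x + ((α * ip x x : ℝ) : EReal)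

/-- The proximal mapping (as a set of minimizers). -/
def proxSet (ip : E → E → ℝ) (f : E → EReal) (γ : ℝ) (x : E) : Set E :=
  {w | ∀ w' : E,
    f w + ((1 / (2 * γ) * ip (w - x) (w - x) : ℝ) : EReal) ≤
      f w' + ((1 / (2 * γ) * ip (w' - x) (w' - x) : ℝ) : EReal)}

/-- The proximal map of `f` with parameter `γ` is single-valued around `z` and the resulting
map is directionally differentiable at `z`. -/
def ProxSingleDirDiff (ip : E → E → ℝ) (f : E → EReal) (γ : ℝ) (z : E) : Prop :=
  ∃ V ∈ nhds z, ∃ P : E → E, (∀ u ∈ V, proxSet ip f γ u = {P u}) ∧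
    ∀ h : E, ∃ L : E,
      Tendsto (fun t : ℝ => t⁻¹ • (P (z + t • h) - P z)) (nhdsWithin 0 (Set.Ioi 0)) (nhds L)

/-- The parabolic difference quotient. -/
noncomputable def parabQuot (f : E → EReal) (x w : E) (t : ℝ) (z : E) : EReal :=
  (((2 / t ^ 2) : ℝ) : EReal) *
    (f (x + t • w + (t ^ 2 / 2) • z) - f x - ((t * (subderiv f x w).toReal : ℝ) : EReal))

/-- The parabolic subderivative `d²f(x)(w | z)`. -/
noncomputable def parabSubderiv (f : E → EReal) (x w z : E) : EReal :=
  Filter.liminf (fun p : ℝ × E => parabQuot f x w p.1 p.2)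
    ((nhdsWithin (0 : ℝ) (Set.Ioi 0)) ×ˢ nhds z)

/-- `f` is parabolically epi-differentiable at `x` for `w`. -/
def ParabEpiDiff (f : E → EReal) (x w : E) : Prop :=
  (∃ z : E, parabSubderiv f x w z < ⊤) ∧
    ∀ t : ℕ → ℝ, (∀ k, 0 < t k) → Tendsto t atTop (nhds 0) →
      ∀ z : E, ∃ zs : ℕ → E, Tendsto zs atTop (nhds z) ∧
        Tendsto (fun k => parabQuot f x w (t k) (zs k)) atTop (nhds (parabSubderiv f x w z))

/-- `φ` is a generalized quadratic form: its domain is a linear subspace and on the domain it is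
given by a symmetric linear operator. -/
def IsGQF (ip : E → E → ℝ) (φ : E → EReal) : Prop :=
  (φ 0 ≠ ⊤) ∧
  (∀ x y : E, φ x ≠ ⊤ → φ y ≠ ⊤ → φ (x + y) ≠ ⊤) ∧
  (∀ (c : ℝ) (x : E), φ x ≠ ⊤ → φ (c • x) ≠ ⊤) ∧
  ∃ L : E → E,
    (∀ x y : E, φ x ≠ ⊤ → φ y ≠ ⊤ → L (x + y) = L x + L y) ∧
    (∀ (c : ℝ) (x : E), φ x ≠ ⊤ → L (c • x) = c • L x) ∧
    (∀ x y : E, φ x ≠ ⊤ → φ y ≠ ⊤ → ip (L x) y = ip x (L y)) ∧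
    (∀ x : E, φ x ≠ ⊤ → φ x = ((ip (L x) x : ℝ) : EReal))

/-- `f` is generalized twice differentiable at `x` for `v`. -/
def GenTwiceDiff (ip : E → E → ℝ) (f : E → EReal) (x v : E) : Prop :=
  TwiceEpiDiff ip f x v ∧ IsGQF ip (subderiv2 ip f x v)

/-- Proto-differentiability of a set-valued map `F` at `x` for `y ∈ F x`. -/
def ProtoDiff (F : E → Set E) (x y : E) : Prop :=
  ∀ w η : E, (w, η) ∈ tangentCone {p : E × E | p.2 ∈ F p.1} (x, y) →
    ∀ t : ℕ → ℝ, (∀ k, 0 < t k) → Tendsto t atTop (nhds 0) →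
      ∃ ws ηs : ℕ → E, Tendsto ws atTop (nhds w) ∧ Tendsto ηs atTop (nhds η) ∧
        ∀ k, y + t k • ηs k ∈ F (x + t k • ws k)

/-- Relative interior of a set (interior relative to its affine hull). -/
def relInterior (C : Set E) : Set E :=
  {y | y ∈ C ∧ ∃ V ∈ nhds y, ∀ z ∈ V, z ∈ affineSpan ℝ C → z ∈ C}

/-- A polyhedral set: the intersection of finitely many closed half-spaces. -/
def IsPolyhedral (ip : E → E → ℝ) (C : Set E) : Prop :=
  ∃ (k : ℕ) (a : Fin k → E) (b : Fin k → ℝ), C = {x | ∀ j : Fin k, ip (a j) x ≤ b j}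

/-- The subdifferential of a convex function. -/
def convexSubdiff (ip : E → E → ℝ) (f : E → EReal) (x : E) : Set E :=
  {v | ∀ z : E, f x + ((ip v (z - x) : ℝ) : EReal) ≤ f z}

/-- The natural inner product on `E × ℝ`. -/
def ipProd (ip : E → E → ℝ) : E × ℝ → E × ℝ → ℝ :=
  fun p q => ip p.1 q.1 + p.2 * q.2

/-- The epigraph of `f`. -/
def epiSet (f : E → EReal) : Set (E × ℝ) :=
  {p | f p.1 ≤ (p.2 : EReal)}

/-- `f` is subdifferentially regular at `x`. -/
def SubdiffRegularAt (ip : E → E → ℝ) (f : E → EReal) (x : E) : Prop :=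
  IsFiniteAt f x ∧
    regNormalCone (ipProd ip) (epiSet f) (x, (f x).toReal) =
      limNormalCone (ipProd ip) (epiSet f) (x, (f x).toReal)

/-! Real-valued versions: semidifferentiability, gradients. -/

/-- `f` is semidifferentiable at `x`. -/
def SemiDiffAt (f : E → ℝ) (x : E) : Prop :=
  ∀ w : E, ∃ d : ℝ,
    Tendsto (fun p : ℝ × E => (p.1)⁻¹ * (f (x + p.1 • p.2) - f x))
      ((nhdsWithin (0 : ℝ) (Set.Ioi 0)) ×ˢ nhds w) (nhds d)

/-- The (real value of the) subderivative of a real-valued function. -/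
noncomputable def dReal (f : E → ℝ) (x w : E) : ℝ :=
  (subderiv (fun y => ((f y : ℝ) : EReal)) x w).toReal

/-- The second-order difference quotient built from the subderivative. -/
noncomputable def sdq2R (f : E → ℝ) (x : E) (t : ℝ) (w : E) : ℝ :=
  (2 / t ^ 2) * (f (x + t • w) - f x - t * dReal f x w)

/-- `f` is twice semidifferentiable at `x`. -/
def TwiceSemiDiffAt (f : E → ℝ) (x : E) : Prop :=
  SemiDiffAt f x ∧
    ∀ w : E, ∃ d : ℝ,
      Tendsto (fun p : ℝ × E => sdq2R f x p.1 p.2)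
        ((nhdsWithin (0 : ℝ) (Set.Ioi 0)) ×ˢ nhds w) (nhds d)

/-- The second semiderivative `d²f(x)(w)` (the liminf; it is the full limit whenever `f` is
twice semidifferentiable at `x`). -/
noncomputable def secondSemiDeriv (f : E → ℝ) (x w : E) : EReal :=
  Filter.liminf (fun p : ℝ × E => ((sdq2R f x p.1 p.2 : ℝ) : EReal))
    ((nhdsWithin (0 : ℝ) (Set.Ioi 0)) ×ˢ nhds w)

/-- `f` is (Fréchet) differentiable at `x` with gradient `g` (w.r.t. inner product `ip`). -/
def HasGradAt (ip : E → E → ℝ) (f : E → ℝ) (x g : E) : Prop :=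
  Tendsto (fun y : E => (nrm ip (y - x))⁻¹ * (f y - f x - ip g (y - x)))
    (nhdsWithin x {x}ᶜ) (nhds 0)

/-- `f` is locally Lipschitz continuous around `x`. -/
def LocLipAt (ip : E → E → ℝ) (f : E → ℝ) (x : E) : Prop :=
  ∃ V ∈ nhds x, ∃ ℓ : ℝ, 0 ≤ ℓ ∧ ∀ a ∈ V, ∀ b ∈ V, |f a - f b| ≤ ℓ * nrm ip (a - b)

/-- `f` is twice differentiable at `x` with gradient map `G` near `x` and second derivative
(the derivative of `G` at `x`) given by the linear map `Dxx`. -/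
def HasSecondDerivAt (ip : E → E → ℝ) (f : E → EReal) (x : E) (G : E → E) (Dxx : E → E) :
    Prop :=
  ∃ V ∈ nhds x, ∃ fr : E → ℝ,
    (∀ z ∈ V, f z = ((fr z : ℝ) : EReal)) ∧
    (∀ z ∈ V, HasGradAt ip fr z (G z)) ∧
    IsLinearMap ℝ Dxx ∧
    Tendsto (fun z : E => (nrm ip (z - x))⁻¹ • (G z - G x - Dxx (z - x)))
      (nhdsWithin x {x}ᶜ) (nhds 0)

/-- `f` is twice differentiable at `x`. -/
def TwiceDiffAt (ip : E → E → ℝ) (f : E → EReal) (x : E) : Prop :=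
  ∃ G Dxx : E → E, HasSecondDerivAt ip f x G Dxx

end Generic

/-! ## Eigenvalues and spectral machinery -/

open scoped Classical in
/-- The eigenvalues of a real symmetric matrix, arranged in nonincreasing order
(junk value `0` if the matrix is not symmetric). -/
noncomputable def eigval {n : ℕ} (X : Matrix (Fin n) (Fin n) ℝ) : Fin n → ℝ :=
  if h : X.IsHermitian then
    fun i => h.eigenvalues (Tuple.sort (fun j => -h.eigenvalues j) i)
  else 0

/-- `Oⁿ(X)`: orthogonal matrices realizing the ordered spectral decomposition of `X`. -/
def eigOrth {n : ℕ} (X : Matrix (Fin n) (Fin n) ℝ) : Set (Matrix (Fin n) (Fin n) ℝ) :=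
  {U | U * Uᵀ = 1 ∧ X = U * Matrix.diagonal (eigval X) * Uᵀ}

open scoped Classical in
/-- The block `α_m` of indices `j` whose eigenvalue `λ_j(X)` equals `λ_i(X)`. -/
noncomputable def blockSet {n : ℕ} (X : Matrix (Fin n) (Fin n) ℝ) (i : Fin n) :
    Finset (Fin n) :=
  Finset.univ.filter fun j => eigval X j = eigval X i

lemma mem_blockSet_self {n : ℕ} (X : Matrix (Fin n) (Fin n) ℝ) (i : Fin n) :
    i ∈ blockSet X i := by
  simp [blockSet]

/-- The increasing enumeration of the block of `i`. -/
noncomputable def blockEmb {n : ℕ} (X : Matrix (Fin n) (Fin n) ℝ) (i : Fin n) :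
    Fin (blockSet X i).card → Fin n :=
  fun a => ((blockSet X i).orderIsoOfFin rfl a : Fin n)

/-- The position of `i` inside its own block. -/
noncomputable def blockIdx {n : ℕ} (X : Matrix (Fin n) (Fin n) ℝ) (i : Fin n) :
    Fin (blockSet X i).card :=
  ((blockSet X i).orderIsoOfFin rfl).symm ⟨i, mem_blockSet_self X i⟩

/-- The principal submatrix of `M` corresponding to the block of `i` (for `X`). -/
noncomputable def blockMat {n : ℕ} (X M : Matrix (Fin n) (Fin n) ℝ) (i : Fin n) :
    Matrix (Fin (blockSet X i).card) (Fin (blockSet X i).card) ℝ :=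
  Matrix.of fun a b => M (blockEmb X i a) (blockEmb X i b)

/-- The directional derivative `λ'(X;H)` of the ordered eigenvalue map, computed through
`U ∈ Oⁿ(X)`: blockwise ordered eigenvalues of `U_{α_m}ᵀ H U_{α_m}`. -/
noncomputable def lambdaDir {n : ℕ} (X U H : Matrix (Fin n) (Fin n) ℝ) : Fin n → ℝ :=
  fun i => eigval (blockMat X (Uᵀ * H * U) i) (blockIdx X i)

open scoped Classical in
/-- The Moore–Penrose pseudoinverse of a square real matrix, characterized by the four
Penrose equations. -/
noncomputable def pinv {n : ℕ} (A : Matrix (Fin n) (Fin n) ℝ) :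
    Matrix (Fin n) (Fin n) ℝ :=
  if h : ∃ B : Matrix (Fin n) (Fin n) ℝ,
      A * B * A = A ∧ B * A * B = B ∧ (A * B)ᵀ = A * B ∧ (B * A)ᵀ = B * A
  then h.choose else 0

/-- The curvature term `2 ∑ₘ ⟨Diag(y)_{αₘαₘ}, U_{αₘ}ᵀ H (μₘ I - X)† H U_{αₘ}⟩`, written as a
single sum over all indices. -/
noncomputable def curvTerm {n : ℕ} (X U H : Matrix (Fin n) (Fin n) ℝ) (y : Fin n → ℝ) : ℝ :=
  2 * ∑ i : Fin n, y i *
    (Uᵀ * (H * pinv (eigval X i • (1 : Matrix (Fin n) (Fin n) ℝ) - X) * H) * U) i i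

/-- Two symmetric matrices admit a simultaneous ordered spectral decomposition. -/
def simOrdSpec {k : ℕ} (A B : Matrix (Fin k) (Fin k) ℝ) : Prop :=
  ∃ P : Matrix (Fin k) (Fin k) ℝ, P * Pᵀ = 1 ∧
    A = P * Matrix.diagonal (eigval A) * Pᵀ ∧
    B = P * Matrix.diagonal (eigval B) * Pᵀ

/-- The subspace of symmetric `n × n` real matrices. -/
def symSubmodule (n : ℕ) : Submodule ℝ (Matrix (Fin n) (Fin n) ℝ) where
  carrier := {A | A.IsSymm}
  add_mem' := by
    intro a b ha hb
    simp only [Set.mem_setOf_eq, Matrix.IsSymm] at *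
    rw [Matrix.transpose_add, ha, hb]
  zero_mem' := by
    simp only [Set.mem_setOf_eq, Matrix.IsSymm, Matrix.transpose_zero]
  smul_mem' := by
    intro c a ha
    simp only [Set.mem_setOf_eq, Matrix.IsSymm] at *
    rw [Matrix.transpose_smul, ha]

/-- The space `Sⁿ` of symmetric `n × n` real matrices. -/
abbrev Sym (n : ℕ) : Type := ↥(symSubmodule n)

/-- The trace inner product `⟨A, B⟩ = tr(AB)` on `Sⁿ`. -/
noncomputable def ipM {n : ℕ} (A B : Sym n) : ℝ :=
  ((A : Matrix (Fin n) (Fin n) ℝ) * (B : Matrix (Fin n) (Fin n) ℝ)).trace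

/-- The Euclidean inner product on `ℝⁿ`. -/
def ipV {n : ℕ} (v w : Fin n → ℝ) : ℝ :=
  ∑ i, v i * w i

/-- The spectral function `g = θ ∘ λ` on `Sⁿ`. -/
noncomputable def specFn {n : ℕ} (θ : (Fin n → ℝ) → EReal) : Sym n → EReal :=
  fun A => θ (eigval (A : Matrix (Fin n) (Fin n) ℝ))

/-- A function on `ℝⁿ` is symmetric (permutation invariant). -/
def SymmetricFn {n : ℕ} {α : Type*} (θ : (Fin n → ℝ) → α) : Prop :=
  ∀ (x : Fin n → ℝ) (σ : Equiv.Perm (Fin n)), θ (fun i => x (σ i)) = θ x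

/-- The diagonal matrix `Diag(w)` as an element of `Sⁿ`. -/
noncomputable def diagSym {n : ℕ} (w : Fin n → ℝ) : Sym n :=
  ⟨Matrix.diagonal w, Matrix.isSymm_diagonal w⟩

/-- The `i`-th order statistic: `orderStat x i` is the `i`-th largest entry of `x`. -/
noncomputable def orderStat {n : ℕ} (x : Fin n → ℝ) : Fin n → ℝ :=
  fun i => x (Tuple.sort (fun j => -x j) i)

/-!
A proximal subgradient satisfies `⟨Y, ·⟩ ≤ dg(X)`, and a finite second subderivative at `H` forces
`dg(X)(H) ≤ ⟨Y, H⟩`, so it can be finite only on the critical cone. Conversely, if `H` is critical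
and `g` has a finite parabolic subderivative at `X` for `H`, then the second-order difference
quotients along the corresponding parabola stay bounded.

Parabolas are transferred from `θ` to `g` as follows. In an orthonormal eigenbasis of `X` which also
diagonalizes the diagonal blocks of `H`, the off-diagonal blocks of `H` are commutators of a skew
matrix `A` with `Diag(λ(X))`. Conjugating `Diag(λ(X) + t λ'(X; H))` by `exp(tA)` therefore gives a
curve `X + t H + (t² / 2) Z(t)` with `Z` continuous and with known spectrum. Combined with the
Hoffman–Wielandt inequality, this curve also yields `dg(X)(H) = dθ(λ(X))(λ'(X; H))`.
-/

/-! ### Extended-real difference quotients -/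

lemma coe_mul_sub_coe_le_coe_iff {c : ℝ} (hc : 0 < c) (v : EReal) (a m : ℝ) :
    (c : EReal) * (v - a) ≤ m ↔ v ≤ ((a + m / c : ℝ) : EReal) := by
  induction v with
  | bot => simp [EReal.bot_sub, EReal.coe_mul_bot_of_pos hc]
  | top => simp [EReal.coe_mul_top_of_pos hc, -EReal.coe_add]
  | coe x =>
    norm_cast
    rw [← sub_le_iff_le_add', le_div_iff₀ hc, mul_comm]

lemma coe_le_coe_mul_sub_coe_iff {c : ℝ} (hc : 0 < c) (v : EReal) (a m : ℝ) :
    (m : EReal) ≤ c * (v - a) ↔ ((a + m / c : ℝ) : EReal) ≤ v := by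
  induction v with
  | bot => simp [EReal.bot_sub, EReal.coe_mul_bot_of_pos hc, -EReal.coe_add]
  | top => simp [EReal.coe_mul_top_of_pos hc]
  | coe x =>
    norm_cast
    rw [← le_sub_iff_add_le', div_le_iff₀ hc, mul_comm]

lemma coe_mul_sub_coe_sub_coe_le_coe_iff {c : ℝ} (hc : 0 < c) (v : EReal) (a b m : ℝ) :
    (c : EReal) * (v - a - b) ≤ m ↔ v ≤ ((a + b + m / c : ℝ) : EReal) := by
  have hsub : v - a - b = v - ((a + b : ℝ) : EReal) := by
    induction v with
    | bot => simp [EReal.bot_sub]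
    | top => simp [-EReal.coe_add]
    | coe x => norm_cast; ring
  rw [hsub, coe_mul_sub_coe_le_coe_iff hc]

lemma liminf_le_liminf_of_tendsto {α β γ : Type*} [CompleteLattice γ] {l : Filter α}
    {l' : Filter β} {u : α → γ} {v : β → γ} {φ : β → α} (hφ : Tendsto φ l' l)
    (huv : ∀ᶠ b in l', u (φ b) = v b) : liminf u l ≤ liminf v l' :=
  calc liminf u l ≤ liminf u (map φ l') := liminf_le_liminf_of_le hφ
    _ = liminf (u ∘ φ) l' := (liminf_comp u φ l').symm
    _ = liminf v l' := liminf_congr huv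

lemma eventually_fst_pos {β : Type*} (l : Filter β) : ∀ᶠ p : ℝ × β in 𝓝[>] 0 ×ˢ l, 0 < p.1 :=
  tendsto_fst.eventually self_mem_nhdsWithin

lemma tendsto_fst_nhdsGT_zero {β : Type*} (l : Filter β) :
    Tendsto (fun p : ℝ × β => p.1) (𝓝[>] 0 ×ˢ l) (𝓝 0) :=
  tendsto_fst.mono_right nhdsWithin_le_nhds

/-! ### First- and second-order subderivatives -/

lemma IsFiniteAt.exists_eq_coe {f : E → EReal} {x : E} (hx : IsFiniteAt f x) :
    ∃ a : ℝ, f x = a :=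
  ⟨(f x).toReal, (EReal.coe_toReal hx.1 hx.2).symm⟩

section Variational

/-- The standing assumption on the pairing `ip` in which gradients are represented: bilinearity
and joint continuity. -/
structure IsContinuousBilinear [AddCommGroup E] [Module ℝ E] [TopologicalSpace E]
    (ip : E → E → ℝ) : Prop where
  add_left : ∀ x y z, ip (x + y) z = ip x z + ip y z
  smul_left : ∀ (c : ℝ) x y, ip (c • x) y = c * ip x y
  add_right : ∀ x y z, ip x (y + z) = ip x y + ip x z
  smul_right : ∀ (c : ℝ) x y, ip x (c • y) = c * ip x y
  continuous : Continuous (Function.uncurry ip)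

variable {F : Type*} [AddCommGroup E] [Module ℝ E] [TopologicalSpace E]
  [AddCommGroup F] [Module ℝ F] [TopologicalSpace F]
  {ip : E → E → ℝ} {f : E → EReal} {h : F → EReal} {x v w : E} {y u : F}

lemma IsContinuousBilinear.tendsto (hip : IsContinuousBilinear ip) {α : Type*} {l : Filter α}
    {a b : α → E} (ha : Tendsto a l (𝓝 v)) (hb : Tendsto b l (𝓝 w)) :
    Tendsto (fun p => ip (a p) (b p)) l (𝓝 (ip v w)) :=
  (hip.continuous.tendsto (v, w)).comp (ha.prodMk_nhds hb)

lemma subderiv_le_subderiv_of_tendsto (hxy : f x = h y) {φ : ℝ × F → E}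
    (hφ : Tendsto φ (𝓝[>] 0 ×ˢ 𝓝 u) (𝓝 w))
    (hfh : ∀ᶠ p in 𝓝[>] 0 ×ˢ 𝓝 u, f (x + p.1 • φ p) = h (y + p.1 • p.2)) :
    subderiv f x w ≤ subderiv h y u :=
  liminf_le_liminf_of_tendsto (tendsto_fst.prodMk hφ) <| hfh.mono fun p hp => by
    simp only [hp, hxy]

lemma parabSubderiv_le_parabSubderiv_of_tendsto (hxy : f x = h y)
    (hd : subderiv f x w = subderiv h y u) {z : E} {z' : F} {φ : ℝ × F → E}
    (hφ : Tendsto φ (𝓝[>] 0 ×ˢ 𝓝 z') (𝓝 z))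
    (hfh : ∀ᶠ p in 𝓝[>] 0 ×ˢ 𝓝 z',
      f (x + p.1 • w + (p.1 ^ 2 / 2) • φ p) = h (y + p.1 • u + (p.1 ^ 2 / 2) • p.2)) :
    parabSubderiv f x w z ≤ parabSubderiv h y u z' :=
  liminf_le_liminf_of_tendsto (tendsto_fst.prodMk hφ) <| hfh.mono fun p hp => by
    simp only [parabQuot, hp, hxy, hd]

lemma mem_tangentCone_dom_of_subderiv_ne_top [FirstCountableTopology E] (hx : f x ≠ ⊤)
    (hw : subderiv f x w ≠ ⊤) : w ∈ tangentCone {a | f a ≠ ⊤} x := by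
  have hfreq := (frequently_lt_of_liminf_lt (by isBoundedDefault) hw.lt_top).and_eventually
    (eventually_fst_pos _)
  obtain ⟨p, hp, hlt⟩ := exists_seq_forall_of_frequently hfreq
  refine ⟨fun k => (p k).1, fun k => (p k).2, fun k => (hlt k).2,
    (tendsto_fst_nhdsGT_zero _).comp hp, tendsto_snd.comp hp, fun k htop => (hlt k).1.ne ?_⟩
  rw [htop, EReal.top_sub hx, EReal.coe_mul_top_of_pos (inv_pos.mpr (hlt k).2)]

lemma mem_tangentCone_dom_of_mem_criticalCone [FirstCountableTopology E] (hx : f x ≠ ⊤)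
    (hw : w ∈ criticalCone ip f x v) : w ∈ tangentCone {a | f a ≠ ⊤} x := by
  refine mem_tangentCone_dom_of_subderiv_ne_top hx ?_
  rw [show subderiv f x w = ip v w from hw]
  exact EReal.coe_ne_top _

-- A bounded second-order quotient forces the first-order quotient to be at most
-- `⟨v, w'⟩ + t * m / 2`, which tends to `⟨v, w⟩`.
lemma subderiv_le_of_subderiv2_ne_top (hip : IsContinuousBilinear ip) (hx : IsFiniteAt f x)
    (hw : subderiv2 ip f x v w ≠ ⊤) : subderiv f x w ≤ ip v w := by
  obtain ⟨a, ha⟩ := hx.exists_eq_coe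
  obtain ⟨m, hm, -⟩ := EReal.lt_iff_exists_real_btwn.mp hw.lt_top
  have hfreq := frequently_lt_of_liminf_lt (by isBoundedDefault) hm
  refine EReal.le_of_forall_lt_iff_le.mp fun c hc => liminf_le_of_frequently_le' ?_
  have hlim : Tendsto (fun p : ℝ × E => ip v p.2 + p.1 * (m / 2)) (𝓝[>] 0 ×ˢ 𝓝 w)
      (𝓝 (ip v w)) := by
    simpa only [zero_mul, add_zero] using (hip.tendsto tendsto_const_nhds tendsto_snd).add
      ((tendsto_fst_nhdsGT_zero (𝓝 w)).mul_const (m / 2))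
  have hlt := hlim.eventually_lt_const (EReal.coe_lt_coe_iff.mp hc)
  refine (hfreq.and_eventually ((eventually_fst_pos _).and hlt)).mono ?_
  rintro ⟨t, w'⟩ ⟨hquot, ht, hlt⟩
  replace hquot := hquot.le
  rw [sdq2, ha, coe_mul_sub_coe_sub_coe_le_coe_iff (by positivity)] at hquot
  rw [ha, coe_mul_sub_coe_le_coe_iff (inv_pos.mpr ht)]
  refine hquot.trans (EReal.coe_le_coe_iff.mpr ?_)
  calc a + t * ip v w' + m / (2 / t ^ 2) = a + t * (ip v w' + t * (m / 2)) := by field_simp; ring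
    _ ≤ a + t * c := by gcongr
    _ = a + c / t⁻¹ := by rw [div_inv_eq_mul, mul_comm]

lemma ProxSubgrad.le_subderiv (hip : IsContinuousBilinear ip) [ContinuousSMul ℝ E]
    (hv : ProxSubgrad ip f x v) (w : E) : ip v w ≤ subderiv f x w := by
  obtain ⟨hx, r, -, ε, hε, hgrowth⟩ := hv
  obtain ⟨a, ha⟩ := hx.exists_eq_coe
  have ht := tendsto_fst_nhdsGT_zero (𝓝 w)
  have hw : Tendsto (fun p : ℝ × E => p.2) (𝓝[>] 0 ×ˢ 𝓝 w) (𝓝 w) := tendsto_snd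
  have hlim : Tendsto (fun p : ℝ × E => ip v p.2 - r / 2 * p.1 * ip p.2 p.2) (𝓝[>] 0 ×ˢ 𝓝 w)
      (𝓝 (ip v w)) := by
    simpa only [mul_zero, zero_mul, sub_zero] using
      (hip.tendsto tendsto_const_nhds hw).sub ((ht.const_mul (r / 2)).mul (hip.tendsto hw hw))
  have hnrm : ∀ᶠ p : ℝ × E in 𝓝[>] 0 ×ˢ 𝓝 w, nrm ip (p.1 • p.2) < ε := by
    refine (hip.tendsto (ht.smul hw) (ht.smul hw)).sqrt.eventually_lt_const ?_
    rwa [hip.smul_left, zero_mul, Real.sqrt_zero]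
  rw [← ((continuous_coe_real_ereal.tendsto _).comp hlim).liminf_eq]
  refine liminf_le_liminf ?_
  filter_upwards [eventually_fst_pos _, hnrm] with p hp hpε
  have hle := hgrowth (x + p.1 • p.2) (by rw [add_sub_cancel_left]; exact hpε.le)
  rw [add_sub_cancel_left, ha, hip.smul_right, hip.smul_left, hip.smul_right] at hle
  rw [Function.comp_apply, ha, coe_le_coe_mul_sub_coe_iff (inv_pos.mpr hp)]
  refine le_of_eq_of_le ?_ hle
  norm_cast
  rw [div_inv_eq_mul]
  ring

-- Along `w + (t / 2) z'` the second-order quotient is the parabolic one minus `⟨v, z'⟩`.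
lemma subderiv2_ne_top_of_parabSubderiv_ne_top (hip : IsContinuousBilinear ip)
    [ContinuousAdd E] [ContinuousSMul ℝ E] (hx : IsFiniteAt f x)
    (hw : w ∈ criticalCone ip f x v) {z : E} (hz : parabSubderiv f x w z ≠ ⊤) :
    subderiv2 ip f x v w ≠ ⊤ := by
  obtain ⟨a, ha⟩ := hx.exists_eq_coe
  obtain ⟨m, hm, -⟩ := EReal.lt_iff_exists_real_btwn.mp hz.lt_top
  have hd : (subderiv f x w).toReal = ip v w := by rw [show subderiv f x w = _ from hw]; rfl
  have hφ : Tendsto (fun p : ℝ × E => (p.1, w + (p.1 / 2) • p.2)) (𝓝[>] 0 ×ˢ 𝓝 z)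
      (𝓝[>] 0 ×ˢ 𝓝 w) := by
    refine tendsto_fst.prodMk ?_
    simpa only [zero_div, zero_smul, add_zero] using (tendsto_const_nhds (x := w)).add
      (((tendsto_fst_nhdsGT_zero (𝓝 z)).div_const 2).smul tendsto_snd)
  have hvz : ∀ᶠ p : ℝ × E in 𝓝[>] 0 ×ˢ 𝓝 z, ip v z - 1 < ip v p.2 :=
    (hip.tendsto tendsto_const_nhds tendsto_snd).eventually_const_lt (sub_one_lt _)
  suffices hle : subderiv2 ip f x v w ≤ ((m - (ip v z - 1) : ℝ) : EReal) from
    (hle.trans_lt (EReal.coe_lt_top _)).ne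
  refine liminf_le_of_frequently_le' (hφ.frequently ?_)
  refine ((frequently_lt_of_liminf_lt (by isBoundedDefault) hm).and_eventually
    ((eventually_fst_pos _).and hvz)).mono ?_
  rintro ⟨t, z'⟩ ⟨hquot, ht, hvz'⟩
  have hpoint : x + t • (w + (t / 2) • z') = x + t • w + (t ^ 2 / 2) • z' := by module
  replace hquot := hquot.le
  rw [parabQuot, ha, hd, coe_mul_sub_coe_sub_coe_le_coe_iff (by positivity)] at hquot
  rw [sdq2, hpoint, ha, coe_mul_sub_coe_sub_coe_le_coe_iff (by positivity)]
  refine hquot.trans (EReal.coe_le_coe_iff.mpr ?_)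
  rw [hip.add_right, hip.smul_right]
  calc a + t * ip v w + m / (2 / t ^ 2)
      = a + t * ip v w + t ^ 2 / 2 * m := by field_simp
    _ ≤ a + t * ip v w + t ^ 2 / 2 * (m - (ip v z - 1) + ip v z') := by gcongr; linarith
    _ = a + t * (ip v w + t / 2 * ip v z') + (m - (ip v z - 1)) / (2 / t ^ 2) := by
      field_simp; ring

theorem dom_subderiv2_eq_criticalCone (hip : IsContinuousBilinear ip) [ContinuousAdd E]
    [ContinuousSMul ℝ E] (hv : ProxSubgrad ip f x v)
    (hparab : ∀ w ∈ criticalCone ip f x v, ∃ z, parabSubderiv f x w z ≠ ⊤) :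
    {w | subderiv2 ip f x v w ≠ ⊤} = criticalCone ip f x v := by
  ext w
  refine ⟨fun hw => le_antisymm (subderiv_le_of_subderiv2_ne_top hip hv.1 hw)
    (hv.le_subderiv hip w), fun hw => ?_⟩
  obtain ⟨z, hz⟩ := hparab w hw
  exact subderiv2_ne_top_of_parabSubderiv_ne_top hip hv.1 hw hz

end Variational

/-! ### The Hoffman–Wielandt inequality -/

section HoffmanWielandt

variable {ι : Type*} [Fintype ι] [DecidableEq ι]

lemma exists_perm_sum_le_of_mem_doublyStochastic {S : Matrix ι ι ℝ}
    (hS : S ∈ doublyStochastic ℝ ι) (c : ι → ι → ℝ) :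
    ∃ σ : Equiv.Perm ι, ∑ i, c i (σ i) ≤ ∑ i, ∑ j, S i j * c i j := by
  let cost : Matrix ι ι ℝ →ₗ[ℝ] ℝ := ∑ i, ∑ j, c i j • Matrix.entryLinearMap ℝ ℝ i j
  have hcost (T : Matrix ι ι ℝ) : cost T = ∑ i, ∑ j, T i j * c i j := by
    simp [cost, LinearMap.sum_apply, mul_comm]
  rw [← SetLike.mem_coe, doublyStochastic_eq_convexHull_permMatrix] at hS
  obtain ⟨-, ⟨σ, rfl⟩, hσ⟩ :=
    (cost.concaveOn convex_univ).exists_le_of_mem_convexHull (Set.subset_univ _) hS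
  refine ⟨σ, ?_⟩
  rw [hcost, hcost] at hσ
  refine le_of_eq_of_le (Finset.sum_congr rfl fun i _ => ?_) hσ
  simp [PEquiv.toMatrix_apply]

lemma sq_entries_mem_doublyStochastic {O : Matrix ι ι ℝ} (hO : O ∈ orthogonalGroup ι ℝ) :
    (Matrix.of fun i j => O i j ^ 2) ∈ doublyStochastic ℝ ι := by
  refine mem_doublyStochastic_iff_sum.mpr ⟨fun i j => sq_nonneg (O i j), fun i => ?_, fun j => ?_⟩
  · simpa [Matrix.mul_apply, sq] using congrFun₂ ((mem_orthogonalGroup_iff ..).mp hO) i i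
  · simpa [Matrix.mul_apply, sq] using congrFun₂ ((mem_orthogonalGroup_iff' ..).mp hO) j j

lemma trace_conj_mul_transpose {P Q : Matrix ι ι ℝ} (hP : P ∈ orthogonalGroup ι ℝ)
    (hQ : Q ∈ orthogonalGroup ι ℝ) (M : Matrix ι ι ℝ) :
    ((Pᵀ * M * Q) * (Pᵀ * M * Q)ᵀ).trace = (M * Mᵀ).trace := by
  have hQM : (Pᵀ * M * Q) * (Pᵀ * M * Q)ᵀ = Pᵀ * (M * (Q * Qᵀ) * Mᵀ * P) := by
    simp only [transpose_mul, transpose_transpose, Matrix.mul_assoc]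
  rw [hQM, (mem_orthogonalGroup_iff ..).mp hQ, Matrix.mul_one, Matrix.trace_mul_comm,
    Matrix.mul_assoc, (mem_orthogonalGroup_iff ..).mp hP, Matrix.mul_one]

-- Conjugating the difference turns its squared Frobenius norm into
-- `∑ i j, O i j ^ 2 * (a i - b j) ^ 2` with `O = Pᵀ * Q`, and Birkhoff's theorem applies to the
-- doubly stochastic matrix of squared entries of `O`.
theorem exists_perm_sum_sq_sub_le_trace {P Q : Matrix ι ι ℝ} (hP : P ∈ orthogonalGroup ι ℝ)
    (hQ : Q ∈ orthogonalGroup ι ℝ) (a b : ι → ℝ) :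
    ∃ σ : Equiv.Perm ι, ∑ i, (a i - b (σ i)) ^ 2 ≤
      ((P * diagonal a * Pᵀ - Q * diagonal b * Qᵀ) *
        (P * diagonal a * Pᵀ - Q * diagonal b * Qᵀ)ᵀ).trace := by
  have hO : Pᵀ * Q ∈ orthogonalGroup ι ℝ := mul_mem (Unitary.star_mem hP) hQ
  have hconj : Pᵀ * (P * diagonal a * Pᵀ - Q * diagonal b * Qᵀ) * Q =
      diagonal a * (Pᵀ * Q) - (Pᵀ * Q) * diagonal b := by
    calc _ = (Pᵀ * P) * diagonal a * (Pᵀ * Q) - (Pᵀ * Q) * diagonal b * (Qᵀ * Q) := by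
          noncomm_ring
      _ = _ := by
          rw [(mem_orthogonalGroup_iff' ..).mp hP, (mem_orthogonalGroup_iff' ..).mp hQ,
            Matrix.one_mul, Matrix.mul_one]
  obtain ⟨σ, hσ⟩ := exists_perm_sum_le_of_mem_doublyStochastic
    (sq_entries_mem_doublyStochastic hO) fun i j => (a i - b j) ^ 2
  refine ⟨σ, hσ.trans_eq ?_⟩
  rw [← trace_conj_mul_transpose hP hQ, hconj, Matrix.trace]
  refine Finset.sum_congr rfl fun i _ => ?_
  rw [Matrix.diag_apply, Matrix.mul_apply]
  refine Finset.sum_congr rfl fun j _ => ?_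
  rw [transpose_apply, Matrix.sub_apply, Matrix.diagonal_mul, Matrix.mul_diagonal, of_apply]
  ring

end HoffmanWielandt

/-! ### Spectral decompositions adapted to a perturbation -/

section Decomposition

variable {k n : ℕ}

lemma eigOrth_nonempty {A : Matrix (Fin n) (Fin n) ℝ} (hA : A.IsSymm) : (eigOrth A).Nonempty := by
  have hherm : A.IsHermitian := by
    rw [Matrix.IsHermitian, conjTranspose_eq_transpose_of_trivial, hA]
  let V : Matrix (Fin n) (Fin n) ℝ := hherm.eigenvectorUnitary
  let s : Equiv.Perm (Fin n) := Tuple.sort fun j => -hherm.eigenvalues j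
  have hV : V * Vᵀ = 1 := (mem_orthogonalGroup_iff ..).mp hherm.eigenvectorUnitary.2
  have hspec : A = V * diagonal hherm.eigenvalues * Vᵀ := hherm.spectral_theorem
  have heig : diagonal (eigval A) = (diagonal hherm.eigenvalues).submatrix s s := by
    rw [Matrix.submatrix_diagonal_equiv, eigval, dif_pos hherm]
    rfl
  refine ⟨V.submatrix id s, ?_, ?_⟩
  · rw [transpose_submatrix, submatrix_mul_equiv, hV, submatrix_id_id]
  · rw [heig, transpose_submatrix, submatrix_mul_equiv, submatrix_mul_equiv, ← hspec,
      submatrix_id_id]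

lemma isSymm_mul_mul_transpose {ι κ : Type*} [Fintype κ] {M : Matrix κ κ ℝ} (hM : M.IsSymm)
    (B : Matrix ι κ ℝ) : (B * M * Bᵀ).IsSymm := by
  rw [Matrix.IsSymm, transpose_mul, transpose_mul, transpose_transpose, hM.eq, Matrix.mul_assoc]

lemma exists_submatrix_diagonalization {e : Fin k → Fin n} (he : Function.Injective e)
    {M : Matrix (Fin n) (Fin n) ℝ} (hM : M.IsSymm) :
    ∃ P : Matrix (Fin n) (Fin n) ℝ, (∀ a ∉ Set.range e, ∀ b, P a b = 0) ∧
      (Pᵀ * P).submatrix e e = 1 ∧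
      (Pᵀ * M * P).submatrix e e = diagonal (eigval (M.submatrix e e)) := by
  obtain ⟨p, hp, hspec⟩ := eigOrth_nonempty (hM.submatrix e)
  let J : Matrix (Fin n) (Fin k) ℝ := (1 : Matrix (Fin n) (Fin n) ℝ).submatrix id e
  have hJ (N : Matrix (Fin n) (Fin n) ℝ) : N.submatrix e e = Jᵀ * N * J := by
    ext i j
    simp [J, Matrix.mul_apply, Matrix.one_apply]
  have hJJ : Jᵀ * J = 1 := by
    rw [← Matrix.mul_one Jᵀ, ← hJ, submatrix_one e he]
  have hp' : pᵀ * p = 1 := mul_eq_one_comm.mp hp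
  refine ⟨J * p * Jᵀ, fun a ha b => ?_, ?_, ?_⟩
  · have hJa (d : Fin k) : J a d = 0 := Matrix.one_apply_ne fun had => ha ⟨d, had.symm⟩
    simp only [Matrix.mul_apply, hJa, zero_mul, Finset.sum_const_zero]
  · calc _ = (Jᵀ * J) * pᵀ * (Jᵀ * J) * p * (Jᵀ * J) := by
          rw [hJ]; simp only [transpose_mul, transpose_transpose, Matrix.mul_assoc]
      _ = 1 := by simp only [hJJ, Matrix.one_mul, Matrix.mul_one, hp']
  · calc _ = (Jᵀ * J) * pᵀ * (Jᵀ * M * J) * p * (Jᵀ * J) := by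
          rw [hJ]; simp only [transpose_mul, transpose_transpose, Matrix.mul_assoc]
      _ = pᵀ * (p * diagonal (eigval (M.submatrix e e)) * pᵀ) * p := by
          rw [hJJ, Matrix.one_mul, Matrix.mul_one, ← hJ, ← hspec]
      _ = (pᵀ * p) * diagonal (eigval (M.submatrix e e)) * (pᵀ * p) := by
          simp only [Matrix.mul_assoc]
      _ = _ := by rw [hp', Matrix.one_mul, Matrix.mul_one]

lemma blockSet_eq_of_eigval_eq {X : Matrix (Fin n) (Fin n) ℝ} {i j : Fin n}
    (hij : eigval X i = eigval X j) : blockSet X i = blockSet X j := by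
  rw [blockSet, blockSet, hij]

lemma mem_blockSet {X : Matrix (Fin n) (Fin n) ℝ} {i j : Fin n} :
    j ∈ blockSet X i ↔ eigval X j = eigval X i := by
  simp [blockSet]

lemma blockEmb_blockIdx (X : Matrix (Fin n) (Fin n) ℝ) (i : Fin n) :
    blockEmb X i (blockIdx X i) = i := by
  simp [blockEmb, blockIdx]

lemma commute_diagonal_of_apply_eq_zero {ι : Type*} [Fintype ι] [DecidableEq ι] {l : ι → ℝ}
    {W : Matrix ι ι ℝ} (hW : ∀ a b, l a ≠ l b → W a b = 0) : Commute W (diagonal l) := by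
  refine Matrix.ext fun a b => ?_
  rw [Matrix.mul_diagonal, Matrix.diagonal_mul]
  by_cases hab : l a = l b
  · rw [hab, mul_comm]
  · rw [hW a b hab, zero_mul, mul_zero]

lemma transpose_mul_self_apply_eq_zero {ι κ : Type*} [Fintype ι] {l : ι → κ} {W : Matrix ι ι ℝ}
    (hW : ∀ a b, l a ≠ l b → W a b = 0) {i j : ι} (hij : l i ≠ l j) : (Wᵀ * W) i j = 0 := by
  rw [Matrix.mul_apply]
  refine Finset.sum_eq_zero fun a _ => ?_
  by_cases hai : l a = l i
  · rw [hW a j (hai.trans_ne hij), mul_zero]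
  · rw [transpose_apply, hW a i hai, zero_mul]

lemma exists_eigenspace_diagonalization (X : Matrix (Fin n) (Fin n) ℝ)
    {M : Matrix (Fin n) (Fin n) ℝ} (hM : M.IsSymm) :
    ∃ W ∈ orthogonalGroup (Fin n) ℝ, Commute W (diagonal (eigval X)) ∧
      ∀ i j, eigval X i = eigval X j → (Wᵀ * M * W) i j =
        diagonal (fun i => eigval (blockMat X M i) (blockIdx X i)) i j := by
  choose P hP₀ hPP hPM using fun s : Finset (Fin n) =>
    exists_submatrix_diagonalization (s.orderEmbOfFin rfl).injective hM
  let W : Matrix (Fin n) (Fin n) ℝ := of fun a b => P (blockSet X b) a b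
  have hW₀ (a b : Fin n) (hab : eigval X a ≠ eigval X b) : W a b = 0 :=
    hP₀ _ a (by simpa [mem_blockSet] using hab) b
  have hblock {i j : Fin n} (hij : eigval X i = eigval X j) (N : Matrix (Fin n) (Fin n) ℝ) :
      ∃ x, (blockIdx X i = x ↔ i = j) ∧ (Wᵀ * N * W) i j =
        ((P (blockSet X i))ᵀ * N * P (blockSet X i)).submatrix (blockEmb X i) (blockEmb X i)
          (blockIdx X i) x := by
    have hj : j ∈ Set.range ((blockSet X i).orderEmbOfFin rfl) := by
      simpa [mem_blockSet] using hij.symm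
    obtain ⟨x, rfl⟩ : ∃ x, blockEmb X i x = j := hj
    refine ⟨x, ?_, ?_⟩
    · rw [← ((blockSet X i).orderEmbOfFin rfl).injective.eq_iff]
      exact Eq.congr_left (blockEmb_blockIdx X i)
    · rw [submatrix_apply, blockEmb_blockIdx]
      simp only [Matrix.mul_apply, transpose_apply, W, of_apply, blockSet_eq_of_eigval_eq hij]
  refine ⟨W, (mem_orthogonalGroup_iff' ..).mpr (Matrix.ext fun i j => ?_),
    commute_diagonal_of_apply_eq_zero hW₀, fun i j hij => ?_⟩
  · by_cases hij : eigval X i = eigval X j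
    · obtain ⟨x, hx, hentry⟩ := hblock hij 1
      rw [Matrix.mul_one, Matrix.mul_one] at hentry
      simp only [hentry, Matrix.one_apply, ← hx]
      exact congrFun₂ (hPP (blockSet X i)) (blockIdx X i) x
    · rw [Matrix.one_apply_ne (ne_of_apply_ne _ hij), transpose_mul_self_apply_eq_zero hW₀ hij]
  · obtain ⟨x, hx, hentry⟩ := hblock hij M
    simp only [hentry, Matrix.diagonal_apply, ← hx]
    exact congrFun₂ (hPM (blockSet X i)) (blockIdx X i) x

lemma exists_adapted_eigOrth {X U H : Matrix (Fin n) (Fin n) ℝ} (hU : U ∈ eigOrth X)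
    (hH : H.IsSymm) :
    ∃ V ∈ eigOrth X, ∀ i j, eigval X i = eigval X j →
      (Vᵀ * H * V) i j = diagonal (lambdaDir X U H) i j := by
  obtain ⟨hUU, hUX⟩ := hU
  obtain ⟨W, hW, hcomm, hdiag⟩ :=
    exists_eigenspace_diagonalization X (isSymm_mul_mul_transpose hH Uᵀ)
  have hWW : W * Wᵀ = 1 := (mem_orthogonalGroup_iff ..).mp hW
  refine ⟨U * W, ⟨?_, ?_⟩, fun i j hij => ?_⟩
  · rw [transpose_mul, Matrix.mul_assoc, ← Matrix.mul_assoc W, hWW, Matrix.one_mul, hUU]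
  · calc X = U * (diagonal (eigval X) * (W * Wᵀ)) * Uᵀ := by rw [hWW, Matrix.mul_one, ← hUX]
      _ = U * (W * diagonal (eigval X)) * Wᵀ * Uᵀ := by
          rw [hcomm.eq]; simp only [Matrix.mul_assoc]
      _ = U * W * diagonal (eigval X) * (U * W)ᵀ := by
          simp only [transpose_mul, Matrix.mul_assoc]
  · rw [← show Wᵀ * (Uᵀ * H * U) * W = (U * W)ᵀ * H * (U * W) by
      simp only [transpose_mul, Matrix.mul_assoc]]
    exact hdiag i j hij

end Decomposition

/-! ### Orthogonal curves through a spectral decomposition -/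

lemma exists_isSymm_remainder {ι : Type*} {F R : ℝ → Matrix ι ι ℝ} {D K : Matrix ι ι ℝ}
    (hF : ∀ t, (F t).IsSymm) (hD : D.IsSymm) (hK : K.IsSymm) (hR : ContinuousAt R 0)
    (hFR : ∀ t, F t = D + t • K + (t ^ 2 / 2) • R t) :
    ∃ S : ℝ → Matrix ι ι ℝ, (∀ t, (S t).IsSymm) ∧ ContinuousAt S 0 ∧
      ∀ t, F t = D + t • K + (t ^ 2 / 2) • S t := by
  have hFRT (t : ℝ) : F t = D + t • K + (t ^ 2 / 2) • (R t)ᵀ := by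
    rw [← (hF t).eq, hFR t]
    simp only [transpose_add, transpose_smul, hD.eq, hK.eq]
  have hRT : ContinuousAt (fun t => (R t)ᵀ) 0 :=
    continuous_id.matrix_transpose.continuousAt.comp hR
  refine ⟨fun t => (1 / 2 : ℝ) • (R t + (R t)ᵀ), fun t => (isSymm_add_transpose_self _).smul _,
    (hR.fun_add hRT).fun_const_smul _, fun t => ?_⟩
  calc F t = (1 / 2 : ℝ) • (F t + F t) := by module
    _ = (1 / 2 : ℝ) • ((D + t • K + (t ^ 2 / 2) • R t) + (D + t • K + (t ^ 2 / 2) • (R t)ᵀ)) := by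
      rw [← hFR t, ← hFRT t]
    _ = _ := by module

section Curve

variable {ι : Type*} [Fintype ι] [DecidableEq ι]

open scoped Matrix.Norms.Operator

-- Off the blocks of equal entries of `l` the commutator equation is solved by dividing by
-- `l j - l i`; on them `x / 0 = 0` gives the entry `0`.
lemma exists_skew_diagonal_add_commutator_eq {l w : ι → ℝ} {K : Matrix ι ι ℝ} (hK : K.IsSymm)
    (hKw : ∀ i j, l i = l j → K i j = diagonal w i j) :
    ∃ A : Matrix ι ι ℝ, Aᵀ = -A ∧ diagonal w + (A * diagonal l - diagonal l * A) = K := by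
  refine ⟨of fun i j => K i j / (l j - l i), ?_, ?_⟩
  · ext i j
    simp only [transpose_apply, of_apply, Matrix.neg_apply, hK.apply i j]
    rw [← neg_sub, div_neg]
  · ext i j
    rw [Matrix.add_apply, Matrix.sub_apply, Matrix.mul_diagonal, Matrix.diagonal_mul, of_apply]
    by_cases hij : l i = l j
    · rw [hKw i j hij, hij, mul_comm, sub_self, add_zero]
    · rw [diagonal_apply_ne _ (ne_of_apply_ne l hij)]
      field_simp [sub_ne_zero.mpr (Ne.symm hij)]
      ring

lemma exp_smul_mem_orthogonalGroup {A : Matrix ι ι ℝ} (hA : Aᵀ = -A) (t : ℝ) :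
    NormedSpace.exp (t • A) ∈ orthogonalGroup ι ℝ := by
  rw [mem_orthogonalGroup_iff, ← Matrix.exp_transpose, transpose_smul, hA, smul_neg,
    ← Matrix.exp_add_of_commute _ _ (Commute.neg_right (Commute.refl (t • A))), add_neg_cancel,
    NormedSpace.exp_zero]

lemma exists_second_order_expansion [NormedAddCommGroup E] [NormedSpace ℝ E]
    {f : ℝ → E} {f' : E} (hf : AnalyticAt ℝ f 0) (hf' : HasDerivAt f f' 0) :
    ∃ S : ℝ → E, ContinuousAt S 0 ∧ ∀ t, f t = f 0 + t • f' + (t ^ 2 / 2) • S t := by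
  obtain ⟨p, hp⟩ := hf
  have hdslope := hp.has_fpower_series_dslope_fslope
  refine ⟨fun t => (2 : ℝ) • dslope (dslope f 0) 0 t,
    hdslope.has_fpower_series_dslope_fslope.continuousAt.const_smul 2, fun t => ?_⟩
  have hfirst : t • dslope f 0 t = f t - f 0 := by simpa using sub_smul_dslope f 0 t
  have hsecond : t • dslope (dslope f 0) 0 t = dslope f 0 t - f' := by
    simpa [hf'.deriv] using sub_smul_dslope (dslope f 0) 0 t
  calc f t = f 0 + t • dslope f 0 t := by rw [hfirst, add_sub_cancel]
    _ = f 0 + t • (f' + t • dslope (dslope f 0) 0 t) := by rw [hsecond, add_sub_cancel]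
    _ = _ := by module

lemma exists_second_order_expansion_exp_conj {𝔸 : Type*} [NormedRing 𝔸] [NormedAlgebra ℝ 𝔸]
    [CompleteSpace 𝔸] (A a b : 𝔸) :
    ∃ R : ℝ → 𝔸, ContinuousAt R 0 ∧ ∀ t : ℝ,
      NormedSpace.exp (t • A) * (a + t • b) * NormedSpace.exp (t • -A) =
        a + t • (b + (A * a - a * A)) + (t ^ 2 / 2) • R t := by
  have hexp (B : 𝔸) : AnalyticAt ℝ (fun t : ℝ => NormedSpace.exp (t • B)) 0 :=
    (NormedSpace.exp_analytic (𝕂 := ℝ) ((0 : ℝ) • B)).fun_comp_of_eq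
      (analyticAt_id.smul analyticAt_const) rfl
  have hexp' (B : 𝔸) : HasDerivAt (fun t : ℝ => NormedSpace.exp (t • B)) B 0 := by
    simpa using hasDerivAt_exp_smul_const (𝕂 := ℝ) B (0 : ℝ)
  have hline : HasDerivAt (fun t : ℝ => a + t • b) b 0 := by
    simpa using (hasDerivAt_id (0 : ℝ)).smul_const b |>.const_add a
  have hderiv : HasDerivAt (fun t : ℝ => NormedSpace.exp (t • A) * (a + t • b) *
      NormedSpace.exp (t • -A)) (b + (A * a - a * A)) 0 := by
    convert ((hexp' A).fun_mul hline).fun_mul (hexp' (-A)) using 1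
    simp only [zero_smul, NormedSpace.exp_zero, add_zero, one_mul, mul_one]
    noncomm_ring
  obtain ⟨R, hR, hexpand⟩ := exists_second_order_expansion
    (((hexp A).fun_mul (by fun_prop)).fun_mul (hexp (-A))) hderiv
  refine ⟨R, hR, fun t => (hexpand t).trans ?_⟩
  simp only [zero_smul, NormedSpace.exp_zero, add_zero, one_mul, mul_one]

lemma exists_orthogonal_curve_diagonal {l w : ι → ℝ} {K : Matrix ι ι ℝ} (hK : K.IsSymm)
    (hKw : ∀ i j, l i = l j → K i j = diagonal w i j) :
    ∃ O R : ℝ → Matrix ι ι ℝ, (∀ t, O t ∈ orthogonalGroup ι ℝ) ∧ (∀ t, (R t).IsSymm) ∧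
      ContinuousAt O 0 ∧ ContinuousAt R 0 ∧ ∀ t, O t * diagonal (l + t • w) * (O t)ᵀ =
        diagonal l + t • K + (t ^ 2 / 2) • R t := by
  obtain ⟨A, hA, hcomm⟩ := exists_skew_diagonal_add_commutator_eq hK hKw
  obtain ⟨R, hR, hexpand⟩ :=
    exists_second_order_expansion_exp_conj A (diagonal l) (diagonal w)
  have hexpand' (t : ℝ) : NormedSpace.exp (t • A) * diagonal (l + t • w) *
      (NormedSpace.exp (t • A))ᵀ = diagonal l + t • K + (t ^ 2 / 2) • R t := by
    have hdiag : diagonal (l + t • w) = diagonal l + t • diagonal w := by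
      rw [← diagonal_smul, diagonal_add]
      rfl
    rw [hdiag, ← Matrix.exp_transpose, transpose_smul, hA, ← hcomm]
    exact hexpand t
  obtain ⟨S, hSsymm, hS, hexpandS⟩ := exists_isSymm_remainder
    (fun t => isSymm_mul_mul_transpose (isSymm_diagonal _) _) (isSymm_diagonal l) hK hR hexpand'
  exact ⟨fun t => NormedSpace.exp (t • A), S, exp_smul_mem_orthogonalGroup hA, hSsymm,
    (NormedSpace.exp_continuous.comp (continuous_id.smul continuous_const)).continuousAt, hS,
    hexpandS⟩

end Curve

/-! ### Spectral functions -/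

section Spectral

variable {n : ℕ}

instance firstCountableTopology_sym : FirstCountableTopology (Sym n) :=
  have : FirstCountableTopology (Matrix (Fin n) (Fin n) ℝ) :=
    inferInstanceAs (FirstCountableTopology (Fin n → Fin n → ℝ))
  Topology.IsInducing.subtypeVal.firstCountableTopology

/-- The symmetric matrix `O · Diag(a) · Oᵀ`; for orthogonal `O` it has spectrum `a`, which need
not be listed in nonincreasing order. -/
def conjDiag (O : Matrix (Fin n) (Fin n) ℝ) (a : Fin n → ℝ) : Sym n :=
  ⟨O * diagonal a * Oᵀ, isSymm_mul_mul_transpose (isSymm_diagonal a) O⟩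

lemma conjDiag_add (O : Matrix (Fin n) (Fin n) ℝ) (a b : Fin n → ℝ) :
    conjDiag O (a + b) = conjDiag O a + conjDiag O b := by
  refine Subtype.ext ?_
  change O * diagonal (a + b) * Oᵀ = O * diagonal a * Oᵀ + O * diagonal b * Oᵀ
  rw [← Matrix.add_mul, ← Matrix.mul_add, diagonal_add]
  rfl

lemma conjDiag_smul (O : Matrix (Fin n) (Fin n) ℝ) (c : ℝ) (a : Fin n → ℝ) :
    conjDiag O (c • a) = c • conjDiag O a := by
  refine Subtype.ext ?_
  change O * diagonal (c • a) * Oᵀ = c • (O * diagonal a * Oᵀ)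
  rw [diagonal_smul, Matrix.mul_smul, Matrix.smul_mul]

lemma conjDiag_zero (O : Matrix (Fin n) (Fin n) ℝ) : conjDiag O 0 = 0 := by
  simpa only [zero_smul] using conjDiag_smul O 0 0

lemma tendsto_conjDiag {α : Type*} {l : Filter α} {O : α → Matrix (Fin n) (Fin n) ℝ}
    {a : α → Fin n → ℝ} {Q : Matrix (Fin n) (Fin n) ℝ} {b : Fin n → ℝ} (hO : Tendsto O l (𝓝 Q))
    (ha : Tendsto a l (𝓝 b)) : Tendsto (fun p => conjDiag (O p) (a p)) l (𝓝 (conjDiag Q b)) :=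
  tendsto_subtype_rng.mpr <| (hO.mul ((continuous_id.matrix_diagonal.tendsto b).comp ha)).mul
    ((continuous_id.matrix_transpose.tendsto Q).comp hO)

lemma isContinuousBilinear_ipM : IsContinuousBilinear (ipM (n := n)) where
  add_left A B C := by simp [ipM, Matrix.add_mul]
  smul_left c A B := by simp [ipM]
  add_right A B C := by simp [ipM, Matrix.mul_add]
  smul_right c A B := by simp [ipM]
  continuous := by
    change Continuous fun p : Sym n × Sym n => (p.1.val * p.2.val).trace
    fun_prop

lemma exists_perm_sum_sq_sub_eigval_le {O : Matrix (Fin n) (Fin n) ℝ}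
    (hO : O ∈ orthogonalGroup (Fin n) ℝ) (a : Fin n → ℝ) (B : Sym n) :
    ∃ σ : Equiv.Perm (Fin n), ∑ i, (a i - eigval B.val (σ i)) ^ 2 ≤
      ipM (conjDiag O a - B) (conjDiag O a - B) := by
  obtain ⟨Q, hQ, hB⟩ := eigOrth_nonempty B.2
  obtain ⟨σ, hσ⟩ := exists_perm_sum_sq_sub_le_trace hO ((mem_orthogonalGroup_iff ..).mpr hQ) a
    (eigval B.val)
  refine ⟨σ, hσ.trans_eq ?_⟩
  have hsymm : (conjDiag O a - B).valᵀ = (conjDiag O a - B).val := (conjDiag O a - B).2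
  rw [← hB, ipM]
  nth_rw 2 [← hsymm]
  rfl

lemma specFn_conjDiag {θ : (Fin n → ℝ) → EReal} (hsym : SymmetricFn θ)
    {O : Matrix (Fin n) (Fin n) ℝ} (hO : O ∈ orthogonalGroup (Fin n) ℝ) (a : Fin n → ℝ) :
    specFn θ (conjDiag O a) = θ a := by
  obtain ⟨σ, hσ⟩ := exists_perm_sum_sq_sub_eigval_le hO a (conjDiag O a)
  have hzero : ∑ i, (a i - eigval (conjDiag O a).val (σ i)) ^ 2 = 0 := by
    refine le_antisymm (hσ.trans_eq ?_) (Finset.sum_nonneg fun i _ => sq_nonneg _)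
    simp [ipM]
  have ha : a = fun i => eigval (conjDiag O a).val (σ i) := by
    ext i
    have hi := (Finset.sum_eq_zero_iff_of_nonneg fun i _ => sq_nonneg _).mp hzero i
      (Finset.mem_univ i)
    exact sub_eq_zero.mp (pow_eq_zero_iff two_ne_zero |>.mp hi)
  exact ((congrArg θ ha).trans (hsym _ σ)).symm

lemma exists_conjDiag_expansion {X : Sym n} {U : Matrix (Fin n) (Fin n) ℝ}
    (hU : U ∈ eigOrth X.val) (H : Sym n) :
    ∃ (O : ℝ → Matrix (Fin n) (Fin n) ℝ) (Z : ℝ → Sym n),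
      (∀ t, O t ∈ orthogonalGroup (Fin n) ℝ) ∧ ContinuousAt O 0 ∧ ContinuousAt Z 0 ∧
      ∀ t, conjDiag (O t) (eigval X.val + t • lambdaDir X.val U H.val) =
        X + t • H + (t ^ 2 / 2) • Z t := by
  obtain ⟨V, ⟨hVV, hVX⟩, hblock⟩ := exists_adapted_eigOrth hU H.2
  have hK : (Vᵀ * H.val * V).IsSymm := isSymm_mul_mul_transpose H.2 Vᵀ
  have hVH : V * (Vᵀ * H.val * V) * Vᵀ = H.val := by
    calc _ = (V * Vᵀ) * H.val * (V * Vᵀ) := by simp only [Matrix.mul_assoc]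
      _ = H.val := by rw [hVV, Matrix.one_mul, Matrix.mul_one]
  obtain ⟨O, R, hO, hRsymm, hOcont, hRcont, hexpand⟩ :=
    exists_orthogonal_curve_diagonal hK hblock
  refine ⟨fun t => V * O t, fun t => ⟨V * R t * Vᵀ, isSymm_mul_mul_transpose (hRsymm t) V⟩,
    fun t => mul_mem ((mem_orthogonalGroup_iff ..).mpr hVV) (hO t),
    continuousAt_const.mul hOcont,
    ((continuousAt_const.mul hRcont).mul continuousAt_const).codRestrict _,
    fun t => Subtype.ext ?_⟩
  calc V * O t * diagonal (eigval X.val + t • lambdaDir X.val U H.val) * (V * O t)ᵀ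
      = V * (O t * diagonal (eigval X.val + t • lambdaDir X.val U H.val) * (O t)ᵀ) * Vᵀ := by
        simp only [transpose_mul, Matrix.mul_assoc]
    _ = V * diagonal (eigval X.val) * Vᵀ + t • (V * (Vᵀ * H.val * V) * Vᵀ) +
        (t ^ 2 / 2) • (V * R t * Vᵀ) := by
        rw [hexpand]
        simp only [Matrix.mul_add, Matrix.add_mul, Matrix.mul_smul, Matrix.smul_mul]
    _ = X.val + t • H.val + (t ^ 2 / 2) • (V * R t * Vᵀ) := by rw [hVH, ← hVX]

lemma tendsto_of_sum_sq_sub_le {α ι : Type*} [Fintype ι] {l : Filter α} {φ : α → ι → ℝ}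
    {w : ι → ℝ} {B : α → ℝ} (hB : Tendsto B l (𝓝 0))
    (hφ : ∀ᶠ p in l, ∑ i, (w i - φ p i) ^ 2 ≤ B p) :
    Tendsto φ l (𝓝 w) := by
  refine tendsto_pi_nhds.mpr fun i => ?_
  have hsqrt : Tendsto (fun p => √(B p)) l (𝓝 0) := by simpa using hB.sqrt
  refine tendsto_iff_dist_tendsto_zero.mpr
    (squeeze_zero' (.of_forall fun p => dist_nonneg) (hφ.mono fun p hp => ?_) hsqrt)
  rw [dist_comm, Real.dist_eq]
  refine Real.abs_le_sqrt (le_trans ?_ hp)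
  exact Finset.single_le_sum (f := fun i => (w i - φ p i) ^ 2) (fun i _ => sq_nonneg _)
    (Finset.mem_univ i)

variable {θ : (Fin n → ℝ) → EReal} {X : Sym n} {U : Matrix (Fin n) (Fin n) ℝ}

lemma subderiv_specFn_le (hsym : SymmetricFn θ) (hU : U ∈ eigOrth X.val) (H : Sym n) :
    subderiv (specFn θ) X H ≤ subderiv θ (eigval X.val) (lambdaDir X.val U H.val) := by
  obtain ⟨O, Z, hO, hOcont, hZcont, hexpand⟩ := exists_conjDiag_expansion hU H
  set w := lambdaDir X.val U H.val
  have ht := tendsto_fst_nhdsGT_zero (𝓝 w)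
  refine subderiv_le_subderiv_of_tendsto rfl
    (φ := fun p => H + (p.1 / 2) • Z p.1 + conjDiag (O p.1) (p.2 - w)) ?_ (.of_forall fun p => ?_)
  · have hconj := tendsto_conjDiag (hOcont.tendsto.comp ht) (tendsto_snd.sub_const w)
    simpa [conjDiag_zero] using
      (((ht.div_const 2).smul (hZcont.tendsto.comp ht)).const_add H).add hconj
  · rw [← specFn_conjDiag hsym (hO p.1)]
    congr 1
    calc X + p.1 • (H + (p.1 / 2) • Z p.1 + conjDiag (O p.1) (p.2 - w))
        = (X + p.1 • H + (p.1 ^ 2 / 2) • Z p.1) + p.1 • conjDiag (O p.1) (p.2 - w) := by module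
      _ = conjDiag (O p.1) (eigval X.val + p.1 • w + p.1 • (p.2 - w)) := by
        rw [← hexpand, conjDiag_add _ (_ + _), conjDiag_smul]
      _ = conjDiag (O p.1) (eigval X.val + p.1 • p.2) := by congr 1; module

lemma exists_perm_eigval_add_smul {O : Matrix (Fin n) (Fin n) ℝ}
    (hO : O ∈ orthogonalGroup (Fin n) ℝ) {a w : Fin n → ℝ} {K : Sym n} {t : ℝ} (ht : t ≠ 0)
    (hconj : conjDiag O (a + t • w) = X + t • K) (H : Sym n) :
    ∃ (σ : Equiv.Perm (Fin n)) (u : Fin n → ℝ),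
      (fun i => eigval (X + t • H).val (σ i)) = a + t • u ∧
      ∑ i, (w i - u i) ^ 2 ≤ ipM (K - H) (K - H) := by
  obtain ⟨σ, hσ⟩ := exists_perm_sum_sq_sub_eigval_le hO (a + t • w) (X + t • H)
  obtain ⟨u, hu⟩ : ∃ u : Fin n → ℝ, (fun i => eigval (X + t • H).val (σ i)) = a + t • u :=
    ⟨t⁻¹ • ((fun i => eigval (X + t • H).val (σ i)) - a), by rw [smul_inv_smul₀ ht]; abel⟩
  refine ⟨σ, u, hu, ?_⟩
  have hdiff : X + t • K - (X + t • H) = t • (K - H) := by module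
  have hsq (i : Fin n) : ((a + t • w) i - eigval (X + t • H).val (σ i)) ^ 2 =
      t ^ 2 * (w i - u i) ^ 2 := by
    rw [show eigval (X + t • H).val (σ i) = a i + t * u i from congrFun hu i, Pi.add_apply,
      Pi.smul_apply, smul_eq_mul]
    ring
  rw [hconj, hdiff, Finset.sum_congr rfl fun i _ => hsq i, ← Finset.mul_sum,
    isContinuousBilinear_ipM.smul_left, isContinuousBilinear_ipM.smul_right, ← mul_assoc,
    ← sq] at hσ
  exact le_of_mul_le_mul_left hσ (by positivity)

-- The Hoffman–Wielandt permutation matches `λ(X + t H')` with the spectrum `λ(X) + t λ'(X; H)` of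
-- the curve, so the resulting difference quotients converge to `λ'(X; H)`.
lemma le_subderiv_specFn (hsym : SymmetricFn θ) (hU : U ∈ eigOrth X.val) (H : Sym n) :
    subderiv θ (eigval X.val) (lambdaDir X.val U H.val) ≤ subderiv (specFn θ) X H := by
  obtain ⟨O, Z, hO, -, hZcont, hexpand⟩ := exists_conjDiag_expansion hU H
  set w := lambdaDir X.val U H.val
  have ht := tendsto_fst_nhdsGT_zero (𝓝 H)
  let D : ℝ × Sym n → Sym n := fun p => H + (p.1 / 2) • Z p.1 - p.2
  have hD : Tendsto D (𝓝[>] 0 ×ˢ 𝓝 H) (𝓝 0) := by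
    simpa using (((ht.div_const 2).smul (hZcont.tendsto.comp ht)).const_add H).sub tendsto_snd
  have hipD : Tendsto (fun p => ipM (D p) (D p)) (𝓝[>] 0 ×ˢ 𝓝 H) (𝓝 0) := by
    simpa [ipM] using isContinuousBilinear_ipM.tendsto hD hD
  have hconj (t : ℝ) : conjDiag (O t) (eigval X.val + t • w) = X + t • (H + (t / 2) • Z t) := by
    rw [hexpand]
    module
  choose! σ φ hφ hle using fun (p : ℝ × Sym n) (hp : p.1 ≠ 0) =>
    exists_perm_eigval_add_smul (hO p.1) hp (hconj p.1) p.2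
  have hne : ∀ᶠ p : ℝ × Sym n in 𝓝[>] 0 ×ˢ 𝓝 H, p.1 ≠ 0 :=
    (eventually_fst_pos _).mono fun _ => ne_of_gt
  refine subderiv_le_subderiv_of_tendsto rfl (φ := φ)
    (tendsto_of_sum_sq_sub_le hipD (hne.mono hle)) (hne.mono fun p hp => ?_)
  rw [← hφ p hp]
  exact hsym _ (σ p)

lemma subderiv_specFn (hsym : SymmetricFn θ) (hU : U ∈ eigOrth X.val) (H : Sym n) :
    subderiv (specFn θ) X H = subderiv θ (eigval X.val) (lambdaDir X.val U H.val) :=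
  (subderiv_specFn_le hsym hU H).antisymm (le_subderiv_specFn hsym hU H)

lemma exists_parabSubderiv_specFn_le (hsym : SymmetricFn θ) (hU : U ∈ eigOrth X.val) (H : Sym n)
    (z : Fin n → ℝ) :
    ∃ Z, parabSubderiv (specFn θ) X H Z ≤
      parabSubderiv θ (eigval X.val) (lambdaDir X.val U H.val) z := by
  obtain ⟨O, Z, hO, hOcont, hZcont, hexpand⟩ := exists_conjDiag_expansion hU H
  have ht := tendsto_fst_nhdsGT_zero (𝓝 z)
  refine ⟨Z 0 + conjDiag (O 0) z, parabSubderiv_le_parabSubderiv_of_tendsto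
    (f := specFn θ) (x := X) (h := θ) (y := eigval X.val) rfl (subderiv_specFn hsym hU H)
    ((hZcont.tendsto.comp ht).add (tendsto_conjDiag (hOcont.tendsto.comp ht) tendsto_snd))
    (.of_forall fun p => ?_)⟩
  simp only [Function.comp_apply]
  rw [smul_add, ← add_assoc, ← hexpand, ← conjDiag_smul, ← conjDiag_add,
    specFn_conjDiag hsym (hO p.1)]

end Spectral

theorem dom_second_subderiv_eq_critical_cone_general {n : ℕ} (θ : (Fin n → ℝ) → EReal)
    (X Y : Sym n) (hsym : SymmetricFn θ) (hprox : ProxSubgrad ipM (specFn θ) X Y)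
    (hparab : ∀ H ∈ criticalCone ipM (specFn θ) X Y, ∃ U ∈ eigOrth X.val,
      ∃ z, parabSubderiv θ (eigval X.val) (lambdaDir X.val U H.val) z ≠ ⊤) :
    {H : Sym n | subderiv2 ipM (specFn θ) X Y H ≠ ⊤} = criticalCone ipM (specFn θ) X Y := by
  refine dom_subderiv2_eq_criticalCone isContinuousBilinear_ipM hprox fun H hH => ?_
  obtain ⟨U, hU, z, hz⟩ := hparab H hH
  obtain ⟨Z, hZ⟩ := exists_parabSubderiv_specFn_le hsym hU H z
  exact ⟨Z, (hZ.trans_lt hz.lt_top).ne⟩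

/-- Proposition 3.7: domain of the second subderivative equals the critical
cone, under parabolic epi-differentiability of `θ`. -/
theorem dom_second_subderiv_eq_critical_cone {n : ℕ} (θ : (Fin n → ℝ) → EReal)
    (X Y : Sym n)
    (hsym : SymmetricFn θ) (hLip : LocLipRelDom ipV θ)
    (hprox : ProxSubgrad ipM (specFn θ) X Y)
    (hparab : ∀ U ∈ eigOrth X.val, ∀ H : Sym n,
      H ∈ tangentCone {A : Sym n | specFn θ A ≠ ⊤} X →
        ParabEpiDiff θ (eigval X.val) (lambdaDir X.val U H.val)) :
    {H : Sym n | subderiv2 ipM (specFn θ) X Y H ≠ ⊤} =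
      criticalCone ipM (specFn θ) X Y := by
  obtain ⟨U, hU⟩ := eigOrth_nonempty X.2
  exact dom_second_subderiv_eq_critical_cone_general θ X Y hsym hprox fun H hH =>
    ⟨U, hU, (hparab U hU H (mem_tangentCone_dom_of_mem_criticalCone hprox.1.1 hH)).1.imp
      fun _ => LT.lt.ne⟩

end SpecPaper
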